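/- Let I be a finite set with |I| = n ≥ 3. Then ℝ^I = cone({e_i : i ∈ I}) ∪ ⋃_{i∈I} cone({e_j : j ≠ i} ∪ {f_j : j ≠ i}) ∪ ⋃_{i∈I} cone({h} ∪ {f_j : j ≠ i}); that is, every x ∈ ℝ^I lies in at least one of these 2n+1 cones. -/

import Mathlib

open scoped BigOperators

/-- The set of all finite nonnegative linear combinations of elements of `S`. -/
def coneGen {I : Type*} (S : Set (I → ℝ)) : Set (I → ℝ) :=
  {x | ∃ (k : ℕ) (c : Fin k → ℝ) (v : Fin k → (I → ℝ)),
    (∀ j, 0 ≤ c j) ∧ (∀ j, v j ∈ S) ∧ x = ∑ j, c j • v j}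

lemma cg_zero {I : Type*} (S : Set (I → ℝ)) : (0 : I → ℝ) ∈ coneGen S :=
  ⟨0, fun _ => 0, fun _ => 0, fun _ => le_rfl, fun j => j.elim0, by simp⟩

lemma cg_smul {I : Type*} {S : Set (I → ℝ)} {v : I → ℝ} (hv : v ∈ S) {c : ℝ} (hc : 0 ≤ c) :
    c • v ∈ coneGen S :=
  ⟨1, fun _ => c, fun _ => v, fun _ => hc, fun _ => hv, by simp⟩

lemma cg_add {I : Type*} {S : Set (I → ℝ)} {x y : I → ℝ} (hx : x ∈ coneGen S)
    (hy : y ∈ coneGen S) : x + y ∈ coneGen S := by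
  obtain ⟨k, c, v, hc, hv, rfl⟩ := hx
  obtain ⟨l, d, w, hd, hw, rfl⟩ := hy
  refine ⟨k + l, Fin.append c d, Fin.append v w, ?_, ?_, ?_⟩
  · intro j
    refine Fin.addCases (fun j => ?_) (fun j => ?_) j <;> simp [hc, hd]
  · intro j
    refine Fin.addCases (fun j => ?_) (fun j => ?_) j <;> simp [hv, hw]
  · simp [Fin.sum_univ_add]

lemma cg_sum {I ι : Type*} {S : Set (I → ℝ)} (s : Finset ι) (g : ι → I → ℝ)
    (hg : ∀ j ∈ s, g j ∈ coneGen S) : ∑ j ∈ s, g j ∈ coneGen S :=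
  Finset.sum_induction g (· ∈ coneGen S) (fun _ _ => cg_add) (cg_zero S) hg

/-- Point 5 of proposition `prop:descr:ev` (completeness): the `2n+1` cones
`cone({e_i : i ∈ I})`, `cone({e_j, f_j : j ≠ i})` and `cone({h} ∪ {f_j : j ≠ i})`
cover `ℝ^I`. -/
theorem stmt_9 {I : Type*} [Fintype I] [DecidableEq I] (hn : 3 ≤ Fintype.card I)
    (e : I → (I → ℝ)) (he : ∀ i, e i = Pi.single i 1)
    (h : I → ℝ) (hh : h = -∑ i, e i)
    (f : I → (I → ℝ)) (hf : ∀ i, f i = h + e i) :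
    (Set.univ : Set (I → ℝ)) =
      coneGen (Set.range e) ∪
      (⋃ i : I, coneGen ((e '' {j | j ≠ i}) ∪ (f '' {j | j ≠ i}))) ∪
      (⋃ i : I, coneGen ({h} ∪ (f '' {j | j ≠ i}))) := by
  have hE : ∀ c : I → ℝ, ∑ j, c j • e j = c := by
    intro c
    ext k
    simp [he, Finset.sum_apply, Pi.single_apply]
  have hH : ∀ k, h k = -1 := by
    intro k
    simp [hh, he, Finset.sum_apply, Pi.single_apply]
  have hF : ∀ c : I → ℝ, ∑ j, c j • f j = (∑ j, c j) • h + c := by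
    intro c
    simp only [hf, smul_add, Finset.sum_add_distrib, hE, Finset.sum_smul]
  symm
  rw [Set.eq_univ_iff_forall]
  intro x
  have : Nonempty I := Fintype.card_pos_iff.mp (by omega)
  obtain ⟨i, hi⟩ := Finite.exists_min x
  by_cases hm : 0 ≤ x i
  · left; left
    rw [← hE x]
    refine cg_sum _ _ fun j _ => ?_
    exact cg_smul (Set.mem_range_self j) (hm.trans (hi j))
  push Not at hm
  have key : ∀ (S : Set (I → ℝ)) (g : I → I → ℝ) (c : I → ℝ), (∀ j, 0 ≤ c j) → c i = 0 →
      (∀ j, j ≠ i → g j ∈ S) → ∑ j, c j • g j ∈ coneGen S := by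
    intro S g c hc hci hg
    refine cg_sum _ _ fun j _ => ?_
    by_cases hj : j = i
    · rw [hj, hci, zero_smul]; exact cg_zero S
    · exact cg_smul (hg j hj) (hc j)
  obtain ⟨a, ha⟩ : ∃ a : I → ℝ, ∀ j, a j = x j - x i := ⟨_, fun _ => rfl⟩
  have ha0 : ∀ j, 0 ≤ a j := fun j => by rw [ha]; linarith [hi j]
  have hai : a i = 0 := by simp [ha]
  by_cases hs : ∑ j, a j ≤ - x i
  · right
    refine Set.mem_iUnion.mpr ⟨i, ?_⟩
    have hx : x = (- x i - ∑ j, a j) • h + ∑ j, a j • f j := by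
      rw [hF]
      ext k
      simp only [Pi.add_apply, Pi.smul_apply, smul_eq_mul, hH, ha k]
      ring
    rw [hx]
    exact cg_add (cg_smul (Or.inl rfl) (by linarith))
      (key _ _ _ ha0 hai fun j hj => Or.inr ⟨j, hj, rfl⟩)
  · left; right
    push Not at hs
    refine Set.mem_iUnion.mpr ⟨i, ?_⟩
    have hpos : 0 < ∑ j, a j := by linarith
    obtain ⟨r, hr⟩ : ∃ r : ℝ, r = - x i / ∑ j, a j := ⟨_, rfl⟩
    have hr0 : 0 ≤ r := by rw [hr]; exact div_nonneg (by linarith) hpos.le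
    have hr1 : r ≤ 1 := by rw [hr, div_le_one hpos]; exact hs.le
    have hrs : r * ∑ j, a j = - x i := by rw [hr]; field_simp
    have hx : x = ∑ j, ((1 - r) * a j) • e j + ∑ j, (r * a j) • f j := by
      rw [hF (fun j => r * a j), hE (fun j => (1 - r) * a j), ← Finset.mul_sum, hrs]
      ext k
      simp only [Pi.add_apply, Pi.smul_apply, smul_eq_mul, hH, ha k]
      ring
    rw [hx]
    exact cg_add
      (key _ _ (fun j => (1 - r) * a j) (fun j => mul_nonneg (by linarith) (ha0 j)) (by simp [hai])
        fun j hj => Or.inl ⟨j, hj, rfl⟩)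
      (key _ _ (fun j => r * a j) (fun j => mul_nonneg hr0 (ha0 j)) (by simp [hai])
        fun j hj => Or.inr ⟨j, hj, rfl⟩)
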